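/- Let M be a metric tree, let a, x, y ∈ M and r > 0. If x, y ∈ B(a; r), then [x,y] ⊆ B(a; r), where B(a;r) is the open ball of radius r centered at a and [x,y] is the unique metric segment from x to y. (In other words, open balls in a metric tree are convex.) -/

import Mathlib

/-- `S` is a metric segment from `x` to `y` in a metric space: `S` contains `x` and `y`, and
the map `z ↦ dist x z` is an isometry from `S` onto the real interval `[0, dist x y]`. -/
def IsMetricSegment {X : Type*} [MetricSpace X] (S : Set X) (x y : X) : Prop :=
  x ∈ S ∧ y ∈ S ∧
    (∀ z ∈ S, ∀ w ∈ S, |dist x z - dist x w| = dist z w) ∧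
    (fun z => dist x z) '' S = Set.Icc 0 (dist x y)

/-- A metric tree structure on a metric space `M`: every pair of points is joined by a unique
metric segment `seg x y`, and if `[x,z] ∩ [z,y] = {z}` then `[x,z] ∪ [z,y] = [x,y]`. -/
structure MetricTree (M : Type*) [MetricSpace M] where
  seg : M → M → Set M
  seg_isSegment : ∀ x y : M, IsMetricSegment (seg x y) x y
  seg_unique : ∀ x y : M, ∀ S : Set M, IsMetricSegment S x y → S = seg x y
  seg_glue : ∀ x y z : M, seg x z ∩ seg z y = {z} → seg x z ∪ seg z y = seg x y

/-- The set (Kuratowski) measure of noncompactness of `A`: the infimum of all `b > 0` such that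
`A` admits a finite cover by subsets of `A` of diameter at most `b`. -/
noncomputable def setMNC {X : Type*} [MetricSpace X] (A : Set X) : ℝ :=
  sInf {b : ℝ | 0 < b ∧ ∃ (n : ℕ) (E : Fin n → Set X),
    (∀ j, E j ⊆ A) ∧ (∀ j, Metric.diam (E j) ≤ b) ∧ A ⊆ ⋃ j, E j}

/-- The ball (Hausdorff) measure of noncompactness of `A`: the infimum of all `b > 0` such that
`A` admits a finite cover by open balls of radius `b` centered in the ambient space. -/
noncomputable def ballMNC {X : Type*} [MetricSpace X] (A : Set X) : ℝ :=
  sInf {b : ℝ | 0 < b ∧ ∃ (n : ℕ) (c : Fin n → X), A ⊆ ⋃ j, Metric.ball (c j) b}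

/-- The diameter-based ball measure of noncompactness of `A`: the infimum of all `b > 0` such
that `A` admits a finite cover by open balls each of diameter at most `b`. -/
noncomputable def ballDiamMNC {X : Type*} [MetricSpace X] (A : Set X) : ℝ :=
  sInf {b : ℝ | 0 < b ∧ ∃ (n : ℕ) (c : Fin n → X) (r : Fin n → ℝ),
    (∀ j, Metric.diam (Metric.ball (c j) (r j)) ≤ b) ∧ A ⊆ ⋃ j, Metric.ball (c j) (r j)}

/-- `b > 0` is Lifschitz for `X` iff there is `a > 1` such that whenever `dist x y > r > 0`,
some closed ball of radius `r` contains `closedBall x (a*r) ∩ closedBall y (b*r)`. -/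
def IsLifschitz (X : Type*) [MetricSpace X] (b : ℝ) : Prop :=
  0 < b ∧ ∃ a : ℝ, 1 < a ∧ ∀ x y : X, ∀ r : ℝ, 0 < r → r < dist x y →
    ∃ z : X, Metric.closedBall x (a * r) ∩ Metric.closedBall y (b * r) ⊆ Metric.closedBall z r

/-- The Lifschitz characteristic of `X`: the supremum of all `b` Lifschitz for `X`. -/
noncomputable def lifschitzChar (X : Type*) [MetricSpace X] : ℝ :=
  sSup {b : ℝ | IsLifschitz X b}

/-!
Let `z ∈ [x, y]`. If `[a, z]` shares with each of `[z, x]` and `[z, y]` a point other than `z`, say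
`p` and `q`, then `p` and `q` lie on the single segment `[a, z]`, so `d(p, q) < d(p, z) + d(z, q)`;
but `p` and `q` also lie on opposite sides of `z`, so `d(p, q) = d(p, z) + d(z, q)`. Hence `[a, z]`
meets one of the two segments only at `z`, and gluing puts `z` on `[a, x]` or on `[a, y]`: the side
`[x, y]` of a triangle is covered by the other two sides. A point of `[a, x]` or `[a, y]` is no
further from `a` than `x` or `y` is.
-/

lemma dist_add_dist_eq_of_opposite_sides {X : Type*} [PseudoMetricSpace X] {x y z p q : X}
    (hz : dist x z + dist z y = dist x y) (hp : dist z p + dist p x = dist z x)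
    (hq : dist z q + dist q y = dist z y) : dist p z + dist z q = dist p q := by
  have path_le : dist x y ≤ dist x p + dist p q + dist q y := dist_triangle4 x p q y
  rw [dist_comm z p, dist_comm p x, dist_comm z x] at hp
  exact le_antisymm (by linarith) (dist_triangle p z q)

namespace IsMetricSegment

variable {X : Type*} [MetricSpace X] {S : Set X} {x y p q : X}

lemma dist_add_dist (hS : IsMetricSegment S x y) (hp : p ∈ S) :
    dist x p + dist p y = dist x y := by
  obtain ⟨-, hy, isometry, image_eq⟩ := hS
  have dist_le : dist x p ≤ dist x y := (image_eq.subset (Set.mem_image_of_mem _ hp)).2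
  rw [← isometry p hp y hy, abs_of_nonpos (sub_nonpos.2 dist_le)]
  ring

lemma dist_left_le (hS : IsMetricSegment S x y) (hp : p ∈ S) : dist x p ≤ dist x y :=
  (le_add_of_nonneg_right dist_nonneg).trans_eq (hS.dist_add_dist hp)

lemma abs_dist_right_sub_dist_right (hS : IsMetricSegment S x y) (hp : p ∈ S) (hq : q ∈ S) :
    |dist p y - dist q y| = dist p q := by
  rw [← hS.2.2.1 p hp q hq, abs_sub_comm]
  congr 1
  linarith [hS.dist_add_dist hp, hS.dist_add_dist hq]

lemma eq_right_or_eq_right (hS : IsMetricSegment S x y) (hp : p ∈ S) (hq : q ∈ S)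
    (hpq : dist p y + dist y q = dist p q) : p = y ∨ q = y := by
  rw [← hS.abs_dist_right_sub_dist_right hp hq, dist_comm y q] at hpq
  rw [← dist_le_zero, ← dist_le_zero (x := q)]
  rcases abs_cases (dist p y - dist q y) with ⟨habs, -⟩ | ⟨habs, -⟩
  · right; linarith
  · left; linarith

end IsMetricSegment

namespace MetricTree

variable {M : Type*} [MetricSpace M] (T : MetricTree M) {x y z : M}

lemma left_mem_seg (x y : M) : x ∈ T.seg x y := (T.seg_isSegment x y).1

lemma right_mem_seg (x y : M) : y ∈ T.seg x y := (T.seg_isSegment x y).2.1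

lemma mem_seg_of_forall_mem_eq (h : ∀ p ∈ T.seg x z, p ∈ T.seg z y → p = z) :
    z ∈ T.seg x y := by
  have inter_eq : T.seg x z ∩ T.seg z y = {z} :=
    Set.eq_singleton_iff_unique_mem.2
      ⟨⟨T.right_mem_seg x z, T.left_mem_seg z y⟩, fun p hp => h p hp.1 hp.2⟩
  rw [← T.seg_glue x y z inter_eq]
  exact Or.inl (T.right_mem_seg x z)

theorem seg_subset_union (a x y : M) : T.seg x y ⊆ T.seg a x ∪ T.seg a y := by
  intro z hz
  by_contra hnot
  obtain ⟨hzx, hzy⟩ := not_or.1 hnot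
  obtain ⟨p, hp, hpx, hpz⟩ : ∃ p ∈ T.seg a z, p ∈ T.seg z x ∧ p ≠ z := by
    by_contra! h
    exact hzx (T.mem_seg_of_forall_mem_eq h)
  obtain ⟨q, hq, hqy, hqz⟩ : ∃ q ∈ T.seg a z, q ∈ T.seg z y ∧ q ≠ z := by
    by_contra! h
    exact hzy (T.mem_seg_of_forall_mem_eq h)
  have z_between : dist p z + dist z q = dist p q :=
    dist_add_dist_eq_of_opposite_sides ((T.seg_isSegment x y).dist_add_dist hz)
      ((T.seg_isSegment z x).dist_add_dist hpx) ((T.seg_isSegment z y).dist_add_dist hqy)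
  exact ((T.seg_isSegment a z).eq_right_or_eq_right hp hq z_between).elim hpz hqz

end MetricTree

theorem stmt_13 {M : Type*} [MetricSpace M] (T : MetricTree M)
    (a x y : M) (r : ℝ) (hr : 0 < r)
    (hx : x ∈ Metric.ball a r) (hy : y ∈ Metric.ball a r) :
    T.seg x y ⊆ Metric.ball a r := by
  intro z hz
  rw [Metric.mem_ball'] at hx hy ⊢
  rcases T.seg_subset_union a x y hz with hzx | hzy
  · exact ((T.seg_isSegment a x).dist_left_le hzx).trans_lt hx
  · exact ((T.seg_isSegment a y).dist_left_le hzy).trans_lt hy
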